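/- Let L be an r×m integer matrix of full rank r. Then there exists a finite set Λ* of positive real numbers, depending only on L, such that: for every sufficiently large positive integer p, the set of values {λ(j) : j/p ∈ J(L,p)} is contained in Λ*, where λ(j) = p^{m−r} μ_L((j/p + [0,1/p)^m) ∩ ker_T L). -/

import Mathlib

open MeasureTheory Set

noncomputable section

/-- The circle group `𝕋 = ℝ/ℤ`. -/
abbrev 𝕋 : Type := AddCircle (1 : ℝ)

/-- The group homomorphism `x ↦ Lx` induced by an integer matrix `L`. -/
def Lhom {r m : ℕ} (L : Matrix (Fin r) (Fin m) ℤ) (G : Type*) [AddCommGroup G] :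
    (Fin m → G) →+ (Fin r → G) where
  toFun x := fun i => ∑ j, L i j • x j
  map_zero' := by ext i; simp
  map_add' x y := by ext i; simp [smul_add, Finset.sum_add_distrib]

/-- `ker_𝕋 L`, the closed subgroup `{x ∈ 𝕋^m : Lx = 0}` of `𝕋^m`. -/
def kerT {r m : ℕ} (L : Matrix (Fin r) (Fin m) ℤ) : AddSubgroup (Fin m → 𝕋) :=
  (Lhom L 𝕋).ker

/-- The point `j/p = (j(1)/p, …, j(m)/p)` of `𝕋^m`. -/
def discPt (m p : ℕ) (j : Fin m → ℤ) : Fin m → 𝕋 :=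
  fun i => (((j i : ℝ) / p : ℝ) : 𝕋)

/-- The discrete torus `Λ(p) = ℤ_p^m / p ≤ 𝕋^m`, as a set. -/
def ΛSet (m p : ℕ) : Set (Fin m → 𝕋) :=
  {y | ∃ j : Fin m → ℤ, y = discPt m p j}

/-- The cube `[0, 1/p)^m ⊆ 𝕋^m`. -/
def cube0 (m p : ℕ) : Set (Fin m → 𝕋) :=
  Set.pi Set.univ fun _ : Fin m => (fun t : ℝ => (t : 𝕋)) '' Set.Ico (0 : ℝ) (1 / p)

/-- `J(L,p)`: the points `j/p ∈ Λ(p)` with `μ_L((j/p + [0,1/p)^m) ∩ ker_𝕋 L) > 0`. -/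
def Jset {r m : ℕ} (L : Matrix (Fin r) (Fin m) ℤ) (p : ℕ) (μL : Measure (kerT L)) :
    Set (Fin m → 𝕋) :=
  {y ∈ ΛSet m p | 0 < μL {x : kerT L | (x : Fin m → 𝕋) - y ∈ cube0 m p}}

/-- The weight `λ(j) = p^{m-r} μ_{L,𝕋}((j/p + [0,1/p)^m) ∩ ker_𝕋 L)`. -/
def lamVal {r m : ℕ} (L : Matrix (Fin r) (Fin m) ℤ) (p : ℕ) (μL : Measure (kerT L))
    (j : Fin m → ℤ) : ℝ :=
  (p : ℝ) ^ (m - r) * (μL {x : kerT L | (x : Fin m → 𝕋) - discPt m p j ∈ cube0 m p}).toReal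

/-!
The projection `π : ker_ℝ L → ker_𝕋 L` is a locally injective homomorphism, so `μ_L` pulls back
along it to an invariant measure, i.e. to a multiple of Lebesgue measure on `ker_ℝ L`. Hence
`p ^ dim (ker_ℝ L) * μ_L (π (p⁻¹ • S)) = μ_L (π S)` whenever `π` is injective on `S`.

Let `(j + t) / p`, with `t ∈ [0, 1)^m`, be a point of `ker_𝕋 L` in the cube `j/p + [0, 1/p)^m`. Any
other such point differs from it by a real vector whose image under `L` is integral and, once
`p > ‖L‖`, has norm less than `1`, hence vanishes. So the cube meets `ker_𝕋 L` in a translate of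
`π (p⁻¹ • S_t)`, where `S_t = ([0, 1)^m - t) ∩ ker_ℝ L`, and `λ(j) = μ_L (π S_t)`. By invariance
this depends only on `L t`, an integer vector of norm at most `‖L‖`.
-/

open Function Module
open scoped NNReal Pointwise

section FieldExtension

variable {K F : Type*} [Field K] [Field F] [Algebra K F]

theorem finrank_le_finrank_of_algebraMap_comp_mem {ι : Type*} [Finite ι]
    {p : Submodule K (ι → K)} {q : Submodule F (ι → F)}
    (h : ∀ x ∈ p, algebraMap K F ∘ x ∈ q) : finrank K p ≤ finrank F q := by
  let b := finBasis K p
  have hb : LinearIndependent F fun i => algebraMap K F ∘ (b i : ι → K) :=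
    linearIndependent_algebraMap_comp_iff.2 (b.linearIndependent.map' p.subtype p.ker_subtype)
  have hbq : LinearIndependent F fun i => (⟨_, h _ (b i).2⟩ : q) := .of_comp q.subtype hb
  simpa using hbq.fintype_card_le_finrank

/-- Extending scalars can only increase the rank and the nullity, whose sum stays the same. -/
theorem rank_map_algebraMap {m n : Type*} [Finite m] [Fintype n] (A : Matrix m n K) :
    (A.map (algebraMap K F)).rank = A.rank := by
  have map_mulVec (x : n → K) :
      algebraMap K F ∘ A.mulVec x = (A.map (algebraMap K F)).mulVec (algebraMap K F ∘ x) :=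
    funext fun i => RingHom.map_mulVec (algebraMap K F) A x i
  have rank_le : A.rank ≤ (A.map (algebraMap K F)).rank := by
    refine finrank_le_finrank_of_algebraMap_comp_mem ?_
    rintro _ ⟨x, rfl⟩
    exact ⟨_, (map_mulVec x).symm⟩
  have nullity_le : finrank K A.mulVecLin.ker ≤ finrank F (A.map (algebraMap K F)).mulVecLin.ker :=
    finrank_le_finrank_of_algebraMap_comp_mem fun x (hx : A.mulVec x = 0) => by
      rw [LinearMap.mem_ker, Matrix.mulVecLin_apply, ← map_mulVec, hx]
      exact funext fun _ => map_zero _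
  have sum_K := A.mulVecLin.finrank_range_add_finrank_ker
  have sum_F := (A.map (algebraMap K F)).mulVecLin.finrank_range_add_finrank_ker
  rw [finrank_pi, ← Matrix.rank] at sum_K sum_F
  omega

end FieldExtension

section LocallyInjective

variable {X Y : Type*} [MeasurableSpace X]

theorem exists_measurable_nat_injective_of_isLocallyInjective [TopologicalSpace X]
    [SecondCountableTopology X] [OpensMeasurableSpace X] {f : X → Y} (hf : IsLocallyInjective f) :
    ∃ κ : X → ℕ, Measurable κ ∧ Injective fun x => (f x, κ x) := by
  classical
  choose U hU hxU hinj using hf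
  cases isEmpty_or_nonempty X with
  | inl _ => exact ⟨fun _ => 0, measurable_const, injective_of_subsingleton _⟩
  | inr _ =>
    obtain ⟨t, ht, hcover⟩ :=
      TopologicalSpace.countable_cover_nhds fun x => (hU x).mem_nhds (hxU x)
    have ht_ne : t.Nonempty := by
      by_contra! h
      simp [h, empty_ne_univ] at hcover
    obtain ⟨c, rfl⟩ := ht.exists_eq_range ht_ne
    have hmem (x : X) : ∃ n, x ∈ U (c n) := by
      simpa using hcover.ge (mem_univ x)
    refine ⟨fun x => Nat.find (hmem x), measurable_find hmem fun n => (hU _).measurableSet,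
      fun x y hxy => ?_⟩
    obtain ⟨hfxy, hκ⟩ := Prod.ext_iff.1 hxy
    refine hinj _ (Nat.find_spec (hmem x)) ?_ hfxy
    dsimp only at hκ
    rw [hκ]
    exact Nat.find_spec (hmem y)

variable {f : X → Y} {κ : X → ℕ}

theorem measure_ext_of_forall_injOn (hκ : Measurable κ) (hinj : Injective fun x => (f x, κ x))
    {ν₁ ν₂ : Measure X} (h : ∀ A, MeasurableSet A → InjOn f A → ν₁ A = ν₂ A) : ν₁ = ν₂ := by
  have hcover : ⋃ k, κ ⁻¹' {k} = univ := by
    rw [← preimage_iUnion, iUnion_of_singleton, preimage_univ]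
  refine Measure.ext_of_iUnion_eq_univ hcover fun k => Measure.ext fun A hA => ?_
  rw [Measure.restrict_apply hA, Measure.restrict_apply hA]
  refine h _ (hA.inter (hκ (measurableSet_singleton k))) fun x hx y hy hxy => ?_
  exact hinj (Prod.ext hxy (hx.2.trans hy.2.symm))

/-- The measure is the pullback of `μ.prod count` along the embedding `x ↦ (f x, κ x)`. -/
theorem exists_measure_eq_measure_image [StandardBorelSpace X] [TopologicalSpace Y]
    [T0Space Y] [SecondCountableTopology Y] [MeasurableSpace Y] [OpensMeasurableSpace Y]
    (hf : Measurable f) (hκ : Measurable κ) (hinj : Injective fun x => (f x, κ x))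
    (μ : Measure Y) [SFinite μ] :
    ∃ ν : Measure X, ∀ A, MeasurableSet A → InjOn f A → ν A = μ (f '' A) := by
  have hg : MeasurableEmbedding fun x => (f x, κ x) := (hf.prodMk hκ).measurableEmbedding hinj
  refine ⟨(μ.prod Measure.count).comap fun x => (f x, κ x), fun A hA hfA => ?_⟩
  have hS := hg.measurableSet_image.2 hA
  set S := (fun x => (f x, κ x)) '' A
  have hSk (k : ℕ) : MeasurableSet ((fun y => (y, k)) ⁻¹' S) := measurable_prodMk_right hS
  have hdisj : Pairwise (Disjoint on fun k => (fun y => (y, k)) ⁻¹' S) := by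
    refine fun k l hkl => Set.disjoint_left.2 ?_
    rintro y ⟨a, ha, hak⟩ ⟨b, hb, hbl⟩
    obtain ⟨rfl, rfl⟩ := Prod.ext_iff.1 hak
    obtain ⟨hba, rfl⟩ := Prod.ext_iff.1 hbl
    exact hkl (congrArg κ (hfA ha hb hba.symm))
  have hunion : ⋃ k, (fun y => (y, k)) ⁻¹' S = f '' A := by
    ext y
    simp only [S, mem_iUnion, mem_preimage, mem_image, Prod.mk.injEq]
    exact ⟨fun ⟨_, x, hx, hxy, _⟩ => ⟨x, hx, hxy⟩, fun ⟨x, hx, hxy⟩ => ⟨_, x, hx, hxy, rfl⟩⟩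
  rw [hg.comap_apply, Measure.prod_apply_symm hS, lintegral_count, ← hunion,
    measure_iUnion hdisj hSk]

end LocallyInjective

section LocallyInjectiveHom

variable {H : Type*} [AddGroup H] [MeasurableSpace H]

theorem measure_image_preimage_const_add {G : Type*} [AddGroup G] [MeasurableAdd H]
    (μ : Measure H) [μ.IsAddLeftInvariant] (φ : G →+ H) (g : G) (A : Set G) :
    μ (φ '' ((g + ·) ⁻¹' A)) = μ (φ '' A) := by
  have himage : φ '' ((g + ·) ⁻¹' A) = (φ g + ·) ⁻¹' (φ '' A) := by
    ext y
    constructor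
    · rintro ⟨x, hx, rfl⟩
      exact ⟨g + x, hx, map_add φ g x⟩
    · rintro ⟨x, hx, hxy⟩
      exact ⟨-g + x, by simpa using hx, by simp [hxy]⟩
  rw [himage, measure_preimage_add]

variable [TopologicalSpace H] [T0Space H] [SecondCountableTopology H] [BorelSpace H]
  [MeasurableAdd H] (μ : Measure H) [μ.IsAddLeftInvariant] [IsLocallyFiniteMeasure μ]

/-- The pullback of `μ` to `G` is left invariant and locally finite, so uniqueness of Haar measure
applies to it. -/
theorem exists_measure_image_eq_mul_of_isLocallyInjective {G : Type*} [AddGroup G]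
    [TopologicalSpace G] [IsTopologicalAddGroup G] [LocallyCompactSpace G] [PolishSpace G]
    [MeasurableSpace G] [BorelSpace G] (ν : Measure G) [ν.IsAddHaarMeasure]
    {φ : G →+ H} (hφ : Continuous φ) (hinj : IsLocallyInjective φ) :
    ∃ c : ℝ≥0, ∀ A, MeasurableSet A → InjOn φ A → μ (φ '' A) = c * ν A := by
  obtain ⟨κ, hκ, hφκ⟩ := exists_measurable_nat_injective_of_isLocallyInjective hinj
  obtain ⟨ρ, hρ⟩ := exists_measure_eq_measure_image hφ.measurable hκ hφκ μ
  have invariant : ρ.IsAddLeftInvariant := by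
    refine ⟨fun g => measure_ext_of_forall_injOn hκ hφκ fun A hA hφA => ?_⟩
    have hg := measurable_const_add g
    have hφgA : InjOn φ ((g + ·) ⁻¹' A) := fun x hx y hy hxy =>
      add_left_cancel (hφA hx hy (by simp only [map_add, hxy]))
    rw [Measure.map_apply hg hA, hρ _ (hg hA) hφgA, hρ A hA hφA,
      measure_image_preimage_const_add]
  have locallyFinite : IsLocallyFiniteMeasure ρ := by
    refine ⟨fun x => ?_⟩
    obtain ⟨U, hU, hxU, hφU⟩ := hinj x
    obtain ⟨V, hxV, hV, hμV⟩ := μ.exists_isOpen_measure_lt_top (φ x)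
    have hUV := hU.inter (hV.preimage hφ)
    refine ⟨U ∩ φ ⁻¹' V, hUV.mem_nhds ⟨hxU, hxV⟩, ?_⟩
    rw [hρ _ hUV.measurableSet (hφU.mono inter_subset_left)]
    exact (measure_mono (image_subset_iff.2 inter_subset_right)).trans_lt hμV
  refine ⟨Measure.addHaarScalarFactor ρ ν, fun A hA hφA => ?_⟩
  rw [← hρ A hA hφA]
  exact congrArg (· A) (Measure.isAddLeftInvariant_eq_smul ρ ν)

theorem pow_finrank_mul_measure_image_inv_smul {E : Type*} [NormedAddCommGroup E]
    [NormedSpace ℝ E] [FiniteDimensional ℝ E] [MeasurableSpace E] [BorelSpace E] {φ : E →+ H}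
    (hφ : Continuous φ) (hinj : IsLocallyInjective φ) {p : ℕ} (hp : p ≠ 0) {A : Set E}
    (hA : MeasurableSet A) (hφA : InjOn φ A) :
    p ^ finrank ℝ E * μ (φ '' ((p : ℝ)⁻¹ • A)) = μ (φ '' A) := by
  have := FiniteDimensional.proper_real E
  have hp' : (p : ℝ) ≠ 0 := Nat.cast_ne_zero.2 hp
  have nsmul_inv_smul (x : E) : p • (p : ℝ)⁻¹ • x = x := by
    rw [← Nat.cast_smul_eq_nsmul ℝ, smul_inv_smul₀ hp']
  have hφpA : InjOn φ ((p : ℝ)⁻¹ • A) := by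
    rintro _ ⟨x, hx, rfl⟩ _ ⟨y, hy, rfl⟩ hxy
    have hφxy := congrArg (p • ·) hxy
    simp only [← map_nsmul, nsmul_inv_smul] at hφxy
    exact congrArg _ (hφA hx hy hφxy)
  obtain ⟨c, hc⟩ := exists_measure_image_eq_mul_of_isLocallyInjective μ
    (Measure.addHaar : Measure E) hφ hinj
  have hscale : (p : ENNReal) ^ finrank ℝ E * ENNReal.ofReal ((p : ℝ)⁻¹ ^ finrank ℝ E) = 1 := by
    rw [← ENNReal.ofReal_natCast, ← ENNReal.ofReal_pow p.cast_nonneg,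
      ← ENNReal.ofReal_mul (by positivity), ← mul_pow, mul_inv_cancel₀ hp', one_pow,
      ENNReal.ofReal_one]
  rw [hc _ (hA.const_smul_of_ne_zero (inv_ne_zero hp')) hφpA, hc A hA hφA,
    Measure.addHaar_smul_of_nonneg _ (by positivity), mul_left_comm, ← mul_assoc (p ^ _ : ENNReal),
    hscale, one_mul]

end LocallyInjectiveHom

section Torus

variable {m r : ℕ}

/-- The covering map `ℝ^m → 𝕋^m`. -/
def toTorus (m : ℕ) : (Fin m → ℝ) →+ (Fin m → 𝕋) :=
  (QuotientAddGroup.mk' _).compLeft (Fin m)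

theorem continuous_toTorus : Continuous (toTorus m) :=
  continuous_pi fun i => (AddCircle.continuous_mk' 1).comp (continuous_apply i)

theorem toTorus_eq_zero_iff {x : Fin m → ℝ} :
    toTorus m x = 0 ↔ ∃ n : Fin m → ℤ, (fun i => (n i : ℝ)) = x := by
  have hcoord (i : Fin m) : toTorus m x i = 0 ↔ ∃ k : ℤ, (k : ℝ) = x i :=
    (AddCircle.coe_eq_zero_iff 1).trans (by simp)
  simp only [funext_iff, Pi.zero_apply, hcoord, Classical.skolem]

theorem eq_zero_of_toTorus_eq_zero {x : Fin m → ℝ} (h : toTorus m x = 0) (hx : ‖x‖ < 1) :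
    x = 0 := by
  obtain ⟨n, rfl⟩ := toTorus_eq_zero_iff.1 h
  ext i
  have hn : |(n i : ℝ)| < 1 := (norm_le_pi_norm _ i).trans_lt hx
  have hn0 : n i = 0 := Int.abs_lt_one_iff.1 (by exact_mod_cast hn)
  simp [hn0]

theorem finite_norm_le_and_toTorus_eq_zero (C : ℝ) :
    {x : Fin m → ℝ | ‖x‖ ≤ C ∧ toTorus m x = 0}.Finite := by
  have hball : (Metric.closedBall (0 : Fin m → ℤ) C).Finite :=
    (isCompact_closedBall _ _).finite_of_discrete
  refine (hball.image fun n i => (n i : ℝ)).subset ?_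
  rintro _ ⟨hx, h⟩
  obtain ⟨n, rfl⟩ := toTorus_eq_zero_iff.1 h
  refine ⟨n, mem_closedBall_zero_iff.2 ?_, rfl⟩
  exact (pi_norm_le_iff_of_nonneg ((norm_nonneg _).trans hx)).2 fun i =>
    (norm_le_pi_norm (fun i => (n i : ℝ)) i).trans hx

theorem Lhom_compLeft (L : Matrix (Fin r) (Fin m) ℤ) {G H : Type*} [AddCommGroup G]
    [AddCommGroup H] (f : G →+ H) (x : Fin m → G) :
    Lhom L H (f.compLeft _ x) = f.compLeft _ (Lhom L G x) := by
  ext i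
  simp [Lhom]

/-- The real linear map `x ↦ Lx`, bundled with its continuity to have an operator norm. -/
def realMap (L : Matrix (Fin r) (Fin m) ℤ) : (Fin m → ℝ) →L[ℝ] (Fin r → ℝ) :=
  (L.map (Int.cast : ℤ → ℝ)).mulVecLin.toContinuousLinearMap

theorem realMap_apply (L : Matrix (Fin r) (Fin m) ℤ) (x : Fin m → ℝ) :
    realMap L x = Lhom L ℝ x := by
  ext i
  simp [realMap, Lhom, Matrix.mulVec, dotProduct]

theorem toTorus_mem_kerT_iff {L : Matrix (Fin r) (Fin m) ℤ} {x : Fin m → ℝ} :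
    toTorus m x ∈ kerT L ↔ toTorus r (realMap L x) = 0 := by
  rw [kerT, AddMonoidHom.mem_ker, toTorus, toTorus, Lhom_compLeft, realMap_apply]

variable (L : Matrix (Fin r) (Fin m) ℤ)

/-- The real subspace `{v ∈ ℝ^m : Lv = 0}`, which covers the identity component of `ker_𝕋 L`. -/
abbrev kerR : Submodule ℝ (Fin m → ℝ) :=
  (realMap L).ker

variable {L}

theorem finrank_kerR : finrank ℝ (kerR L) = m - (L.map (Int.cast : ℤ → ℚ)).rank := by
  have hL : L.map (Int.cast : ℤ → ℝ) = (L.map (Int.cast : ℤ → ℚ)).map (algebraMap ℚ ℝ) := by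
    ext
    simp
  have h := (L.map (Int.cast : ℤ → ℝ)).mulVecLin.finrank_range_add_finrank_ker
  rw [← Matrix.rank, hL, rank_map_algebraMap, ← hL, finrank_fin_fun] at h
  exact Nat.eq_sub_of_add_eq' h

theorem mem_kerR_of_toTorus_mem_kerT {x : Fin m → ℝ} (h : toTorus m x ∈ kerT L)
    (hx : ‖realMap L‖ * ‖x‖ < 1) : x ∈ kerR L :=
  eq_zero_of_toTorus_eq_zero (toTorus_mem_kerT_iff.1 h) (((realMap L).le_opNorm x).trans_lt hx)

variable (L)

/-- The restriction `ker_ℝ L → ker_𝕋 L` of the covering map `ℝ^m → 𝕋^m`. -/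
def kerProj : kerR L →+ kerT L :=
  ((toTorus m).comp (kerR L).subtype.toAddMonoidHom).codRestrict (kerT L) fun v =>
    toTorus_mem_kerT_iff.2 (by
      have hv : realMap L v = 0 := v.2
      simp [hv])

variable {L}

theorem coe_kerProj (v : kerR L) : (kerProj L v : Fin m → 𝕋) = toTorus m v := rfl

theorem continuous_kerProj : Continuous (kerProj L) :=
  (continuous_toTorus.comp continuous_subtype_val).subtype_mk _

theorem injOn_kerProj_of_dist_lt_one {A : Set (kerR L)} (hA : ∀ v ∈ A, ∀ w ∈ A, dist v w < 1) :
    InjOn (kerProj L) A := by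
  intro v hv w hw h
  refine Subtype.ext (sub_eq_zero.1 (eq_zero_of_toTorus_eq_zero ?_ ?_))
  · rw [map_sub, ← coe_kerProj, ← coe_kerProj, h, sub_self]
  · rw [← dist_eq_norm]
    exact hA v hv w hw

theorem isLocallyInjective_kerProj : IsLocallyInjective (kerProj L) := fun v =>
  ⟨Metric.ball v 2⁻¹, Metric.isOpen_ball, Metric.mem_ball_self (by norm_num),
    injOn_kerProj_of_dist_lt_one fun x hx y hy => (dist_triangle_right x y v).trans_lt <| by
      linarith [Metric.mem_ball.1 hx, Metric.mem_ball.1 hy]⟩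

/-- The half-open unit cube `[0, 1)^m`. -/
def unitCube (m : ℕ) : Set (Fin m → ℝ) :=
  univ.pi fun _ => Ico 0 1

theorem norm_sub_lt_one_of_mem_unitCube {s t : Fin m → ℝ} (hs : s ∈ unitCube m)
    (ht : t ∈ unitCube m) : ‖s - t‖ < 1 := by
  refine (pi_norm_lt_iff one_pos).2 fun i => abs_sub_lt_iff.2 ?_
  constructor <;> linarith [(hs i trivial).1, (hs i trivial).2, (ht i trivial).1, (ht i trivial).2]

variable (L)

/-- The slice of the unit cube by the translate `t + ker_ℝ L`, moved back to `ker_ℝ L`. -/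
def cubeSlice (t : Fin m → ℝ) : Set (kerR L) :=
  {v | t + v ∈ unitCube m}

theorem measurableSet_cubeSlice (t : Fin m → ℝ) : MeasurableSet (cubeSlice L t) :=
  (measurable_subtype_coe.const_add t) (MeasurableSet.univ_pi fun _ => measurableSet_Ico)

theorem injOn_kerProj_cubeSlice (t : Fin m → ℝ) : InjOn (kerProj L) (cubeSlice L t) :=
  injOn_kerProj_of_dist_lt_one fun v hv w hw => by
    have h := norm_sub_lt_one_of_mem_unitCube hv hw
    rwa [add_sub_add_left_eq_sub] at h

theorem measure_kerProj_cubeSlice_congr (μ : Measure (kerT L)) [μ.IsAddLeftInvariant]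
    {s t : Fin m → ℝ} (h : realMap L s = realMap L t) :
    μ (kerProj L '' cubeSlice L s) = μ (kerProj L '' cubeSlice L t) := by
  have hst : s - t ∈ kerR L := by
    rw [LinearMap.mem_ker]
    simp [h]
  rw [← measure_image_preimage_const_add μ (kerProj L) ⟨s - t, hst⟩ (cubeSlice L t)]
  congr 2
  ext v
  simp [cubeSlice, ← add_assoc]

theorem finite_measure_kerProj_cubeSlice (μ : Measure (kerT L)) [μ.IsAddLeftInvariant] :
    ((fun t => μ (kerProj L '' cubeSlice L t)) ''
      {t ∈ unitCube m | toTorus m t ∈ kerT L}).Finite := by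
  have hfactor : FactorsThrough (fun t => μ (kerProj L '' cubeSlice L t)) (realMap L) :=
    fun _ _ => measure_kerProj_cubeSlice_congr L μ
  rw [← hfactor.extend_comp fun _ => 0, image_comp]
  refine ((finite_norm_le_and_toTorus_eq_zero ‖realMap L‖).subset ?_).image _
  rintro _ ⟨t, ⟨ht, hker⟩, rfl⟩
  have ht1 : ‖t‖ ≤ 1 := (pi_norm_le_iff_of_nonneg zero_le_one).2 fun i => by
    rw [Real.norm_of_nonneg (ht i trivial).1]
    exact (ht i trivial).2.le
  exact ⟨(realMap L).unit_le_opNorm t ht1, toTorus_mem_kerT_iff.1 hker⟩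

/-- The trace `(j/p + [0,1/p)^m) ∩ ker_𝕋 L` of a grid cube, as a subset of `ker_𝕋 L`. -/
def cell (p : ℕ) (j : Fin m → ℤ) : Set (kerT L) :=
  {x | (x : Fin m → 𝕋) - discPt m p j ∈ cube0 m p}

variable {L}

theorem mem_cell_iff {p : ℕ} (hp : p ≠ 0) {j : Fin m → ℤ} {x : kerT L} :
    x ∈ cell L p j ↔
      ∃ t ∈ unitCube m, toTorus m ((p : ℝ)⁻¹ • ((fun i => (j i : ℝ)) + t)) = x := by
  have hp' : (0 : ℝ) < p := by positivity
  have hgrid (t : Fin m → ℝ) : toTorus m ((p : ℝ)⁻¹ • ((fun i => (j i : ℝ)) + t)) =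
      toTorus m ((p : ℝ)⁻¹ • t) + discPt m p j := by
    rw [smul_add, map_add, add_comm]
    congr 1
    ext i
    simp [toTorus, discPt, div_eq_inv_mul]
  simp only [hgrid, ← eq_sub_iff_add_eq]
  constructor
  · intro hx
    choose s hs hsx using fun i => hx i trivial
    refine ⟨(p : ℝ) • s, fun i _ => ⟨?_, ?_⟩, ?_⟩
    · exact mul_nonneg hp'.le (hs i).1
    · exact (lt_div_iff₀' hp').1 (hs i).2
    · rw [inv_smul_smul₀ hp'.ne']
      exact funext hsx
  · rintro ⟨t, ht, htx⟩ i -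
    refine ⟨(p : ℝ)⁻¹ * t i, ⟨?_, ?_⟩, congrFun htx i⟩
    · exact mul_nonneg (inv_nonneg.2 hp'.le) (ht i trivial).1
    · rw [one_div]
      exact mul_lt_of_lt_one_right (inv_pos.2 hp') (ht i trivial).2

theorem toTorus_mem_kerT_of_inv_smul_add {p : ℕ} (hp : p ≠ 0) {j : Fin m → ℤ}
    {t : Fin m → ℝ} (h : toTorus m ((p : ℝ)⁻¹ • ((fun i => (j i : ℝ)) + t)) ∈ kerT L) :
    toTorus m t ∈ kerT L := by
  have hj : toTorus m (fun i => (j i : ℝ)) = 0 := toTorus_eq_zero_iff.2 ⟨j, rfl⟩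
  have hp' : (p : ℝ) ≠ 0 := Nat.cast_ne_zero.2 hp
  have hnsmul := (kerT L).nsmul_mem h p
  rwa [← map_nsmul, ← Nat.cast_smul_eq_nsmul ℝ, smul_inv_smul₀ hp', map_add, hj,
    zero_add] at hnsmul

theorem cell_eq_preimage {p : ℕ} (hp : ‖realMap L‖ < p) {j : Fin m → ℤ} {x : kerT L}
    {t : Fin m → ℝ} (ht : t ∈ unitCube m)
    (hx : toTorus m ((p : ℝ)⁻¹ • ((fun i => (j i : ℝ)) + t)) = x) :
    cell L p j = (-x + ·) ⁻¹' (kerProj L '' ((p : ℝ)⁻¹ • cubeSlice L t)) := by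
  have hp0 : (0 : ℝ) < p := (norm_nonneg _).trans_lt hp
  have hp_ne : p ≠ 0 := by exact_mod_cast hp0.ne'
  have hdiff (s : Fin m → ℝ) : toTorus m ((p : ℝ)⁻¹ • ((fun i => (j i : ℝ)) + s)) - x =
      toTorus m ((p : ℝ)⁻¹ • (s - t)) := by
    rw [← hx, ← map_sub, ← smul_sub, add_sub_add_left_eq_sub]
  ext y
  rw [mem_cell_iff hp_ne]
  constructor
  · rintro ⟨s, hs, hy⟩
    have hst : (p : ℝ)⁻¹ • (s - t) ∈ kerR L := by
      refine mem_kerR_of_toTorus_mem_kerT ?_ ?_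
      · rw [← hdiff, hy]
        exact sub_mem y.2 x.2
      · rw [norm_smul, norm_inv, Real.norm_natCast]
        calc ‖realMap L‖ * ((p : ℝ)⁻¹ * ‖s - t‖) ≤ ‖realMap L‖ * ((p : ℝ)⁻¹ * 1) := by
              gcongr
              exact (norm_sub_lt_one_of_mem_unitCube hs ht).le
          _ = ‖realMap L‖ / p := by rw [mul_one, div_eq_mul_inv]
          _ < 1 := (div_lt_one hp0).2 hp
    have hv : s - t ∈ kerR L := by
      simpa [hp0.ne'] using hst
    refine ⟨(p : ℝ)⁻¹ • ⟨s - t, hv⟩, smul_mem_smul_set ?_, Subtype.ext ?_⟩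
    · simpa [cubeSlice] using hs
    · rw [AddSubgroup.coe_add, AddSubgroup.coe_neg, neg_add_eq_sub, ← hy, hdiff, coe_kerProj]
      rfl
  · rintro ⟨_, ⟨v, hv, rfl⟩, hy⟩
    refine ⟨t + v, hv, ?_⟩
    rw [← sub_left_inj (a := (x : Fin m → 𝕋)), hdiff, add_sub_cancel_left, ← neg_add_eq_sub]
    exact congrArg Subtype.val hy

theorem exists_mem_unitCube_pow_mul_measure_cell {p : ℕ} (hp : ‖realMap L‖ < p) {j : Fin m → ℤ}
    (hne : (cell L p j).Nonempty) (μ : Measure (kerT L)) [μ.IsAddLeftInvariant]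
    [IsLocallyFiniteMeasure μ] :
    ∃ t ∈ unitCube m, toTorus m t ∈ kerT L ∧
      p ^ (m - (L.map (Int.cast : ℤ → ℚ)).rank) * μ (cell L p j) =
        μ (kerProj L '' cubeSlice L t) := by
  have hp0 : p ≠ 0 := by
    rintro rfl
    exact (norm_nonneg (realMap L)).not_gt (by simpa using hp)
  obtain ⟨x, hx⟩ := hne
  obtain ⟨t, ht, htx⟩ := (mem_cell_iff hp0).1 hx
  refine ⟨t, ht, toTorus_mem_kerT_of_inv_smul_add hp0 (htx ▸ x.2), ?_⟩
  rw [cell_eq_preimage hp ht htx, measure_preimage_add, ← finrank_kerR]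
  exact pow_finrank_mul_measure_image_inv_smul μ continuous_kerProj isLocallyInjective_kerProj hp0
    (measurableSet_cubeSlice L t) (injOn_kerProj_cubeSlice L t)

end Torus

theorem lambda_finitely_many_values_general {r m : ℕ} (L : Matrix (Fin r) (Fin m) ℤ)
    (μ : Measure (kerT L)) [μ.IsAddLeftInvariant] [IsFiniteMeasure μ] :
    ∃ Λstar : Finset ℝ, (∀ t ∈ Λstar, 0 < t) ∧
      ∃ p₀ : ℕ, ∀ p : ℕ, p₀ ≤ p → ∀ j : Fin m → ℤ, discPt m p j ∈ Jset L p μ →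
        (p : ℝ) ^ (m - (L.map (Int.cast : ℤ → ℚ)).rank) * (μ (cell L p j)).toReal ∈ Λstar := by
  have hfin := ((finite_measure_kerProj_cubeSlice L μ).image ENNReal.toReal).inter_of_left (Ioi 0)
  refine ⟨hfin.toFinset, fun t ht => ?_, ⌊‖realMap L‖⌋₊ + 1, fun p hp j hj => ?_⟩
  · exact (hfin.mem_toFinset.1 ht).2
  · have hLp : ‖realMap L‖ < p := (Nat.lt_floor_add_one _).trans_le (by exact_mod_cast hp)
    have hpos : 0 < μ (cell L p j) := hj.2
    have hp0 : (0 : ℝ) < p := (norm_nonneg _).trans_lt hLp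
    obtain ⟨t, ht, hker, hvalue⟩ :=
      exists_mem_unitCube_pow_mul_measure_cell hLp (nonempty_of_measure_ne_zero hpos.ne') μ
    refine hfin.mem_toFinset.2 ⟨⟨_, ⟨t, ⟨ht, hker⟩, rfl⟩, ?_⟩, ?_⟩
    · simp [← hvalue]
    · exact mul_pos (pow_pos hp0 _) (ENNReal.toReal_pos hpos.ne' (measure_ne_top _ _))

/-- **The weights `λ(j)` take only finitely many positive values.**
Let `L` be an `r × m` integer matrix of full rank `r` and let `μL` be the Haar probability
measure on `ker_𝕋 L`. There is a finite set `Λ*` of positive reals, depending only on `L`,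
such that for every sufficiently large positive integer `p` one has
`{λ(j) : j/p ∈ J(L,p)} ⊆ Λ*`. -/
theorem lambda_finitely_many_values {r m : ℕ} (L : Matrix (Fin r) (Fin m) ℤ)
    (hrank : (L.map (Int.cast : ℤ → ℚ)).rank = r)
    (μL : Measure (kerT L)) (hHaar : μL.IsAddHaarMeasure) (hprob : IsProbabilityMeasure μL) :
    ∃ Λstar : Finset ℝ, (∀ t ∈ Λstar, 0 < t) ∧
      ∃ p₀ : ℕ, ∀ p : ℕ, p₀ ≤ p →
        ∀ j : Fin m → ℤ, discPt m p j ∈ Jset L p μL → lamVal L p μL j ∈ Λstar := by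
  simpa only [lamVal, cell, hrank] using lambda_finitely_many_values_general L μL
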